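/- Let L be a language recognized by some sweeping reversible automaton (sRFA), and suppose there are strings x, z ∈ Σ* and a nonempty string y ∈ Σ⁺ such that x yⁿ z ∈ L for every n ≥ 1. Then xz ∈ L. -/

import Mathlib

open scoped Classical

/-- Run a partial transition function along a word. -/
def runP {A Q : Type} (d : A → Q → Option Q) (q : Q) (w : List A) : Option Q :=
  w.foldl (fun o a => o.bind (d a)) (some q)

/-- One-way reversible finite automaton (1RFA): a partial deterministic automaton
with a single initial state and injective transition functions. -/
structure RFA (A Q : Type) where
  start : Q
  next : A → Q → Option Q
  inj : ∀ a q q' r, next a q = some r → next a q' = some r → q = q'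
  accept : Set Q

def RFA.Language {A Q : Type} (M : RFA A Q) : Set (List A) :=
  {w | ∃ qf ∈ M.accept, runP M.next M.start w = some qf}

/-- A permutation automaton (1PerFA): every transition function is a totally
defined bijection. -/
def RFA.IsPerm {A Q : Type} (M : RFA A Q) : Prop :=
  (∀ a q, (M.next a q).isSome) ∧ ∀ a r, ∃ q, M.next a q = some r

/-- One-way reversible finite automaton with multiple initial states (MRFA). -/
structure MRFA (A Q : Type) where
  init : Set Q
  next : A → Q → Option Q
  inj : ∀ a q q' r, next a q = some r → next a q' = some r → q = q'
  accept : Set Q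

def MRFA.Language {A Q : Type} (M : MRFA A Q) : Set (List A) :=
  {w | ∃ q0 ∈ M.init, ∃ qf ∈ M.accept, runP M.next q0 w = some qf}

def Rec1RFA (A : Type) (L : Set (List A)) : Prop :=
  ∃ (Q : Type) (_ : Fintype Q) (M : RFA A Q), M.Language = L

def Rec1RFA1 (A : Type) (L : Set (List A)) : Prop :=
  ∃ (Q : Type) (_ : Fintype Q) (M : RFA A Q), M.accept.ncard = 1 ∧ M.Language = L

def Rec1PerFA (A : Type) (L : Set (List A)) : Prop :=
  ∃ (Q : Type) (_ : Fintype Q) (M : RFA A Q), M.IsPerm ∧ M.Language = L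

def Rec1PerFA1 (A : Type) (L : Set (List A)) : Prop :=
  ∃ (Q : Type) (_ : Fintype Q) (M : RFA A Q),
    M.IsPerm ∧ M.accept.ncard = 1 ∧ M.Language = L

def RecMRFA (A : Type) (L : Set (List A)) : Prop :=
  ∃ (Q : Type) (_ : Fintype Q) (M : MRFA A Q), M.Language = L

/-- Sweeping reversible automaton (sRFA), given without its accepting set:
states `Qp` move rightwards, states `Qm` move leftwards; `startT` is the
transition of the left end-marker function on the initial state, `turnL` its
restriction to `Qm`, and `turnR` is the transition function at the right
end-marker.  All transition functions are partial and injective, and the left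
end-marker function is injective on the whole of `{q₀} ∪ Q₋`. -/
structure SRFA (A Qp Qm : Type) where
  start : Qp
  nextP : A → Qp → Option Qp
  nextM : A → Qm → Option Qm
  startT : Option Qp
  turnL : Qm → Option Qp
  turnR : Qp → Option Qm
  injP : ∀ a q q' r, nextP a q = some r → nextP a q' = some r → q = q'
  injM : ∀ a q q' r, nextM a q = some r → nextM a q' = some r → q = q'
  injL : ∀ q q' r, turnL q = some r → turnL q' = some r → q = q'
  injR : ∀ q q' r, turnR q = some r → turnR q' = some r → q = q'
  startT_ne_turnL : ∀ q r, startT = some r → turnL q ≠ some r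

/-- One step of a sweeping automaton on input `⊢w⊣`: a configuration is a state
together with a head position in `{0, 1, …, |w| + 1}`, where position `0` is the
left end-marker, position `i` with `1 ≤ i ≤ |w|` carries the `i`-th input
symbol, and position `|w| + 1` is the right end-marker.  The result is `none`
when the corresponding transition is undefined and the computation halts. -/
noncomputable def SRFA.step {A Qp Qm : Type} (M : SRFA A Qp Qm) (w : List A) :
    (Qp ⊕ Qm) × ℕ → Option ((Qp ⊕ Qm) × ℕ)
  | (Sum.inl q, i) =>
      if i = 0 then
        if q = M.start then M.startT.map (fun p => (Sum.inl p, 1)) else none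
      else if i = w.length + 1 then
        (M.turnR q).map (fun r => (Sum.inr r, w.length))
      else
        (w[i - 1]?.bind (fun a => M.nextP a q)).map (fun p => (Sum.inl p, i + 1))
  | (Sum.inr q, i) =>
      if i = 0 then (M.turnL q).map (fun p => (Sum.inl p, 1))
      else if i = w.length + 1 then none
      else (w[i - 1]?.bind (fun a => M.nextM a q)).map (fun r => (Sum.inr r, i - 1))

/-- The configuration reached after `n` steps of the computation on `w`,
starting in the initial state at the left end-marker (or `none` if the
computation has halted before). -/
noncomputable def SRFA.steps {A Qp Qm : Type} (M : SRFA A Qp Qm) (w : List A) :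
    ℕ → Option ((Qp ⊕ Qm) × ℕ)
  | 0 => some (Sum.inl M.start, 0)
  | n + 1 => (M.steps w n).bind (M.step w)

/-- Acceptance of an ordinary sRFA: the computation halts at the right
end-marker in an accepting state `q ∈ F ⊆ Q₊`. -/
def SRFA.AcceptsR {A Qp Qm : Type} (M : SRFA A Qp Qm) (F : Set Qp) (w : List A) : Prop :=
  ∃ n q, M.steps w n = some (Sum.inl q, w.length + 1) ∧ q ∈ F ∧
    M.step w (Sum.inl q, w.length + 1) = none

def SRFA.LangR {A Qp Qm : Type} (M : SRFA A Qp Qm) (F : Set Qp) : Set (List A) :=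
  {w | M.AcceptsR F w}

/-- Acceptance of an sRFA with acceptance at both sides: the computation halts
at either end-marker in an accepting state `c ∈ F ⊆ Q₊ ∪ Q₋`. -/
def SRFA.AcceptsB {A Qp Qm : Type} (M : SRFA A Qp Qm) (F : Set (Qp ⊕ Qm)) (w : List A) : Prop :=
  ∃ n c i, M.steps w n = some (c, i) ∧ c ∈ F ∧ (i = 0 ∨ i = w.length + 1) ∧
    M.step w (c, i) = none

def SRFA.LangB {A Qp Qm : Type} (M : SRFA A Qp Qm) (F : Set (Qp ⊕ Qm)) : Set (List A) :=
  {w | M.AcceptsB F w}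

def RecSRFA (A : Type) (L : Set (List A)) : Prop :=
  ∃ (Qp Qm : Type) (_ : Fintype Qp) (_ : Fintype Qm) (M : SRFA A Qp Qm) (F : Set Qp),
    M.LangR F = L

/-! An accepting computation is a chain of complete sweeps, and a sweep over `w` only depends on the
partial maps on states induced by `w` and by its reversal. These maps are injective, so on a finite
state set the map induced by `y` extends to a permutation. For every common multiple `n` of
`|Q₊|!` and `|Q₋|!`, the maps induced by `yⁿ` are then restrictions of the identity, and every
sweep over `x yⁿ z` remains a sweep over `xz` with the same first and last state. -/

open Equiv
open scoped Nat

/-- Injectivity of a partial function, encoded as an `Option`-valued function, on its domain. -/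
def PartialInjective {Q R : Type*} (f : Q → Option R) : Prop :=
  ∀ q q' r, f q = some r → f q' = some r → q = q'

theorem PartialInjective.exists_perm_extending {Q : Type*} [Finite Q] {f : Q → Option Q}
    (hf : PartialInjective f) : ∃ e : Perm Q, ∀ q r, f q = some r → e q = r := by
  have := Fintype.ofFinite Q
  have hinj : Set.InjOn (fun q => (f q).getD q) {q | (f q).isSome} := by
    intro q hq q' hq' heq
    obtain ⟨r, hr⟩ := Option.isSome_iff_exists.1 hq
    obtain ⟨r', hr'⟩ := Option.isSome_iff_exists.1 hq'
    obtain rfl : r = r' := by simpa [hr, hr'] using heq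
    exact hf q q' r hr hr'
  obtain ⟨g, hg⟩ := Set.MapsTo.exists_equiv_extend_of_card_eq (t := Finset.univ)
    Finset.card_univ.symm (fun q _ => by simp) hinj
  refine ⟨g.trans (Equiv.subtypeUnivEquiv Finset.mem_univ), fun q r hr => ?_⟩
  simpa [hr] using hg q (by simp [hr])

section RunP

variable {A Q : Type} {d : A → Q → Option Q}

theorem runP_append (q : Q) (u v : List A) :
    runP d q (u ++ v) = (runP d q u).bind fun r => runP d r v := by
  induction v using List.reverseRecOn with
  | nil => simp [runP]
  | append_singleton v a ih =>
    have hsnoc (p : Q) (w : List A) : runP d p (w ++ [a]) = (runP d p w).bind (d a) := by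
      simp [runP]
    simp only [← List.append_assoc, hsnoc, ih, Option.bind_assoc]

theorem runP_take_succ {w : List A} {i : ℕ} {a : A} (ha : w[i]? = some a) (q : Q) :
    runP d q (w.take (i + 1)) = (runP d q (w.take i)).bind (d a) := by
  rw [List.take_add_one, ha, Option.toList_some, runP_append]
  rfl

theorem runP_reverse_drop {w : List A} {i : ℕ} {a : A} (ha : w[i]? = some a) (q : Q) :
    runP d q (w.drop i).reverse = (runP d q (w.drop (i + 1)).reverse).bind (d a) := by
  obtain ⟨hi, rfl⟩ := List.getElem?_eq_some_iff.1 ha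
  rw [List.drop_eq_getElem_cons hi, List.reverse_cons, runP_append]
  rfl

theorem PartialInjective.runP (hd : ∀ a, PartialInjective (d a)) (w : List A) :
    PartialInjective fun q => runP d q w := by
  induction w using List.reverseRecOn with
  | nil => exact fun q q' r hq hq' => Option.some.inj (hq.trans hq'.symm)
  | append_singleton w a ih =>
    intro q q' r hq hq'
    simp only [runP_append] at hq hq'
    obtain ⟨p, hp, hpr⟩ := Option.bind_eq_some_iff.1 hq
    obtain ⟨p', hp', hpr'⟩ := Option.bind_eq_some_iff.1 hq'
    obtain rfl : p = p' := hd a p p' r hpr hpr'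
    exact ih q q' p hp hp'

theorem perm_pow_apply_of_runP_flatten_replicate {e : Perm Q} {y : List A}
    (he : ∀ q r, runP d q y = some r → e q = r) (n : ℕ) {q r : Q}
    (h : runP d q (List.replicate n y).flatten = some r) : (e ^ n) q = r := by
  induction n generalizing q with
  | zero => exact Option.some.inj h
  | succ n ih =>
    rw [List.replicate_succ, List.flatten_cons, runP_append] at h
    obtain ⟨p, hp, hpr⟩ := Option.bind_eq_some_iff.1 h
    rw [pow_succ, Perm.mul_apply, he q p hp, ih hpr]

theorem eq_of_runP_flatten_replicate [Finite Q] (hd : ∀ a, PartialInjective (d a)) {n : ℕ}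
    (hn : (Nat.card Q)! ∣ n) {y : List A} {q r : Q}
    (h : runP d q (List.replicate n y).flatten = some r) : q = r := by
  obtain ⟨e, he⟩ := (PartialInjective.runP hd y).exists_perm_extending
  have hpow : e ^ n = 1 := by
    rw [← Nat.card_perm] at hn
    exact orderOf_dvd_iff_pow_eq_one.1 ((orderOf_dvd_natCard e).trans hn)
  simpa only [hpow, Perm.one_apply] using perm_pow_apply_of_runP_flatten_replicate he n h

theorem runP_append_of_flatten_replicate [Finite Q] (hd : ∀ a, PartialInjective (d a)) {n : ℕ}
    (hn : (Nat.card Q)! ∣ n) {x y z : List A} {q r : Q}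
    (h : runP d q (x ++ (List.replicate n y).flatten ++ z) = some r) :
    runP d q (x ++ z) = some r := by
  rw [runP_append] at h
  obtain ⟨p', hxy, hz⟩ := Option.bind_eq_some_iff.1 h
  rw [runP_append] at hxy
  obtain ⟨p, hx, hy⟩ := Option.bind_eq_some_iff.1 hxy
  obtain rfl := eq_of_runP_flatten_replicate hd hn hy
  rw [runP_append, hx, Option.bind_some, hz]

end RunP

namespace SRFA

variable {A Qp Qm : Type} {M : SRFA A Qp Qm} {w : List A}

theorem step_inl_zero :
    M.step w (Sum.inl M.start, 0) = M.startT.map fun p => (Sum.inl p, 1) := by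
  simp [step]

theorem step_inl_succ {i : ℕ} {a : A} (ha : w[i]? = some a) (q : Qp) :
    M.step w (Sum.inl q, i + 1) = (M.nextP a q).map fun r => (Sum.inl r, i + 2) := by
  have hi : i ≠ w.length := (List.getElem?_eq_some_iff.1 ha).1.ne
  simp [step, ha, hi]

theorem step_inl_length_succ (q : Qp) :
    M.step w (Sum.inl q, w.length + 1) = (M.turnR q).map fun r => (Sum.inr r, w.length) := by
  simp [step]

theorem step_inr_zero (q : Qm) :
    M.step w (Sum.inr q, 0) = (M.turnL q).map fun p => (Sum.inl p, 1) := by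
  simp [step]

theorem step_inr_succ {i : ℕ} {a : A} (ha : w[i]? = some a) (q : Qm) :
    M.step w (Sum.inr q, i + 1) = (M.nextM a q).map fun r => (Sum.inr r, i) := by
  have hi : i ≠ w.length := (List.getElem?_eq_some_iff.1 ha).1.ne
  simp [step, ha, hi]

variable (M w) in
/-- The configuration `c` occurs in the computation of `M` on `w`. -/
def Reaches (c : (Qp ⊕ Qm) × ℕ) : Prop :=
  ∃ n, M.steps w n = some c

theorem Reaches.step {c c' : (Qp ⊕ Qm) × ℕ} (hc : M.Reaches w c) (hstep : M.step w c = some c') :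
    M.Reaches w c' := by
  obtain ⟨n, hn⟩ := hc
  exact ⟨n + 1, by rw [steps, hn, Option.bind_some, hstep]⟩

variable (M w) in
/-- The states in which the computation of `M` on `w` begins a sweep: a state `inl p` begins a
rightward sweep at position `1`, a state `inr r` a leftward sweep at position `|w|`. -/
inductive StartsSweep : Qp ⊕ Qm → Prop
  | start {p} (hp : M.startT = some p) : StartsSweep (Sum.inl p)
  | turnR {p q r} (hp : StartsSweep (Sum.inl p)) (hpq : runP M.nextP p w = some q)
      (hqr : M.turnR q = some r) : StartsSweep (Sum.inr r)
  | turnL {r s p} (hr : StartsSweep (Sum.inr r)) (hrs : runP M.nextM r w.reverse = some s)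
      (hsp : M.turnL s = some p) : StartsSweep (Sum.inl p)

variable (M w) in
/-- The configurations lying on a sweep of the computation of `M` on `w`, described by the first
state of that sweep and the part of `w` already read in it. The initial configuration, at
position `0`, counts as one of them. -/
def OnSweep : (Qp ⊕ Qm) × ℕ → Prop
  | (Sum.inl q, 0) => q = M.start
  | (Sum.inl q, i + 1) => i ≤ w.length ∧
      ∃ p, M.StartsSweep w (Sum.inl p) ∧ runP M.nextP p (w.take i) = some q
  | (Sum.inr q, i) => i ≤ w.length ∧
      ∃ r, M.StartsSweep w (Sum.inr r) ∧ runP M.nextM r (w.drop i).reverse = some q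

theorem StartsSweep.onSweep_inl {p : Qp} (hp : M.StartsSweep w (Sum.inl p)) :
    M.OnSweep w (Sum.inl p, 1) :=
  ⟨Nat.zero_le _, p, hp, rfl⟩

theorem StartsSweep.onSweep_inr {r : Qm} (hr : M.StartsSweep w (Sum.inr r)) :
    M.OnSweep w (Sum.inr r, w.length) :=
  ⟨le_rfl, r, hr, by rw [List.drop_length]; rfl⟩

theorem onSweep_inl_length_succ {q : Qp} :
    M.OnSweep w (Sum.inl q, w.length + 1) ↔
      ∃ p, M.StartsSweep w (Sum.inl p) ∧ runP M.nextP p w = some q := by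
  simp [OnSweep]

theorem onSweep_inr_zero {s : Qm} :
    M.OnSweep w (Sum.inr s, 0) ↔
      ∃ r, M.StartsSweep w (Sum.inr r) ∧ runP M.nextM r w.reverse = some s := by
  simp [OnSweep]

theorem OnSweep.step_inl {q : Qp} {i : ℕ} {c : (Qp ⊕ Qm) × ℕ} (hq : M.OnSweep w (Sum.inl q, i))
    (hstep : M.step w (Sum.inl q, i) = some c) : M.OnSweep w c := by
  cases i with
  | zero =>
    obtain rfl : q = M.start := hq
    rw [step_inl_zero] at hstep
    obtain ⟨p, hp, rfl⟩ := Option.map_eq_some_iff.1 hstep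
    exact (StartsSweep.start hp).onSweep_inl
  | succ i =>
    obtain hi | rfl := hq.1.lt_or_eq
    · obtain ⟨-, p, hp, hpq⟩ := hq
      have ha := List.getElem?_eq_getElem hi
      rw [step_inl_succ ha] at hstep
      obtain ⟨r, hqr, rfl⟩ := Option.map_eq_some_iff.1 hstep
      exact ⟨hi, p, hp, by rw [runP_take_succ ha, hpq, Option.bind_some, hqr]⟩
    · obtain ⟨p, hp, hpq⟩ := onSweep_inl_length_succ.1 hq
      rw [step_inl_length_succ] at hstep
      obtain ⟨r, hqr, rfl⟩ := Option.map_eq_some_iff.1 hstep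
      exact (hp.turnR hpq hqr).onSweep_inr

theorem OnSweep.step_inr {q : Qm} {i : ℕ} {c : (Qp ⊕ Qm) × ℕ} (hq : M.OnSweep w (Sum.inr q, i))
    (hstep : M.step w (Sum.inr q, i) = some c) : M.OnSweep w c := by
  cases i with
  | zero =>
    obtain ⟨r, hr, hrq⟩ := onSweep_inr_zero.1 hq
    rw [step_inr_zero] at hstep
    obtain ⟨p, hqp, rfl⟩ := Option.map_eq_some_iff.1 hstep
    exact (hr.turnL hrq hqp).onSweep_inl
  | succ i =>
    obtain ⟨hi, r, hr, hrq⟩ := hq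
    have ha := List.getElem?_eq_getElem hi
    rw [step_inr_succ ha] at hstep
    obtain ⟨s, hqs, rfl⟩ := Option.map_eq_some_iff.1 hstep
    exact ⟨Nat.le_of_succ_le hi, r, hr, by rw [runP_reverse_drop ha, hrq, Option.bind_some, hqs]⟩

theorem Reaches.onSweep {c : (Qp ⊕ Qm) × ℕ} (hc : M.Reaches w c) : M.OnSweep w c := by
  obtain ⟨n, hn⟩ := hc
  induction n generalizing c with
  | zero =>
    obtain rfl : (Sum.inl M.start, 0) = c := Option.some.inj hn
    rfl
  | succ n ih =>
    obtain ⟨⟨q | q, i⟩, hprev, hstep⟩ := Option.bind_eq_some_iff.1 hn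
    · exact (ih hprev).step_inl hstep
    · exact (ih hprev).step_inr hstep

theorem Reaches.sweep_right {p : Qp} (hp : M.Reaches w (Sum.inl p, 1)) {i : ℕ}
    (hi : i ≤ w.length) {q : Qp} (hpq : runP M.nextP p (w.take i) = some q) :
    M.Reaches w (Sum.inl q, i + 1) := by
  induction i generalizing q with
  | zero =>
    obtain rfl : p = q := Option.some.inj hpq
    exact hp
  | succ i ih =>
    have ha := List.getElem?_eq_getElem hi
    rw [runP_take_succ ha] at hpq
    obtain ⟨q', hpq', hlast⟩ := Option.bind_eq_some_iff.1 hpq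
    exact (ih (Nat.le_of_succ_le hi) hpq').step (by rw [step_inl_succ ha, hlast, Option.map_some])

theorem Reaches.sweep_left {r : Qm} (hr : M.Reaches w (Sum.inr r, w.length)) {i : ℕ}
    (hi : i ≤ w.length) {s : Qm} (hrs : runP M.nextM r (w.drop i).reverse = some s) :
    M.Reaches w (Sum.inr s, i) := by
  induction hi using Nat.decreasingInduction generalizing s with
  | self =>
    rw [List.drop_length] at hrs
    obtain rfl : r = s := Option.some.inj hrs
    exact hr
  | of_succ i hi ih =>
    have ha := List.getElem?_eq_getElem hi
    rw [runP_reverse_drop ha] at hrs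
    obtain ⟨s', hrs', hlast⟩ := Option.bind_eq_some_iff.1 hrs
    exact (ih hrs').step (by rw [step_inr_succ ha, hlast, Option.map_some])

theorem StartsSweep.reaches {c : Qp ⊕ Qm} (hc : M.StartsSweep w c) :
    M.Reaches w (c, Sum.elim (fun _ => 1) (fun _ => w.length) c) := by
  induction hc with
  | start hp =>
    have hinit : M.Reaches w (Sum.inl M.start, 0) := ⟨0, rfl⟩
    exact hinit.step (by rw [step_inl_zero, hp]; rfl)
  | turnR _ hpq hqr ih =>
    rw [← List.take_length (l := w)] at hpq
    exact (ih.sweep_right le_rfl hpq).step (by rw [step_inl_length_succ, hqr]; rfl)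
  | turnL _ hrs hsp ih =>
    rw [← List.drop_zero (l := w)] at hrs
    exact (ih.sweep_left (Nat.zero_le _) hrs).step (by rw [step_inr_zero, hsp]; rfl)

theorem OnSweep.reaches : ∀ {c : (Qp ⊕ Qm) × ℕ}, M.OnSweep w c → M.Reaches w c
  | (Sum.inl _, 0), hc => ⟨0, by rw [steps, show _ = M.start from hc]⟩
  | (Sum.inl _, _ + 1), ⟨hi, _, hp, hpq⟩ => hp.reaches.sweep_right hi hpq
  | (Sum.inr _, _), ⟨hi, _, hr, hrs⟩ => hr.reaches.sweep_left hi hrs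

theorem reaches_iff_onSweep {c : (Qp ⊕ Qm) × ℕ} : M.Reaches w c ↔ M.OnSweep w c :=
  ⟨Reaches.onSweep, OnSweep.reaches⟩

theorem acceptsR_iff_exists_sweep {F : Set Qp} :
    M.AcceptsR F w ↔ ∃ p q, M.StartsSweep w (Sum.inl p) ∧ runP M.nextP p w = some q ∧
      q ∈ F ∧ M.turnR q = none := by
  have hreach (q : Qp) : (∃ n, M.steps w n = some (Sum.inl q, w.length + 1)) ↔
      ∃ p, M.StartsSweep w (Sum.inl p) ∧ runP M.nextP p w = some q :=
    reaches_iff_onSweep.trans onSweep_inl_length_succ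
  simp only [AcceptsR, step_inl_length_succ, Option.map_eq_none_iff]
  constructor
  · rintro ⟨n, q, hn, hq, hhalt⟩
    obtain ⟨p, hp, hpq⟩ := (hreach q).1 ⟨n, hn⟩
    exact ⟨p, q, hp, hpq, hq, hhalt⟩
  · rintro ⟨p, q, hp, hpq, hq, hhalt⟩
    obtain ⟨n, hn⟩ := (hreach q).2 ⟨p, hp, hpq⟩
    exact ⟨n, q, hn, hq, hhalt⟩

variable {w' : List A}

theorem StartsSweep.mono
    (hP : ∀ p q, runP M.nextP p w = some q → runP M.nextP p w' = some q)
    (hM : ∀ r s, runP M.nextM r w.reverse = some s → runP M.nextM r w'.reverse = some s)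
    {c : Qp ⊕ Qm} (hc : M.StartsSweep w c) : M.StartsSweep w' c := by
  induction hc with
  | start hp => exact .start hp
  | turnR _ hpq hqr ih => exact ih.turnR (hP _ _ hpq) hqr
  | turnL _ hrs hsp ih => exact ih.turnL (hM _ _ hrs) hsp

theorem AcceptsR.mono {F : Set Qp}
    (hP : ∀ p q, runP M.nextP p w = some q → runP M.nextP p w' = some q)
    (hM : ∀ r s, runP M.nextM r w.reverse = some s → runP M.nextM r w'.reverse = some s)
    (hw : M.AcceptsR F w) : M.AcceptsR F w' := by
  obtain ⟨p, q, hp, hpq, hq, hhalt⟩ := acceptsR_iff_exists_sweep.1 hw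
  exact acceptsR_iff_exists_sweep.2 ⟨p, q, hp.mono hP hM, hP p q hpq, hq, hhalt⟩

end SRFA

theorem stmt19_general {A Qp Qm : Type} [Finite Qp] [Finite Qm] (M : SRFA A Qp Qm) (F : Set Qp)
    (x y z : List A)
    (h : x ++ (List.replicate ((Nat.card Qp)! * (Nat.card Qm)!) y).flatten ++ z ∈ M.LangR F) :
    x ++ z ∈ M.LangR F := by
  refine SRFA.AcceptsR.mono (fun p q hpq => ?_) (fun r s hrs => ?_) h
  · exact runP_append_of_flatten_replicate M.injP (Nat.dvd_mul_right _ _) hpq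
  · simp only [List.reverse_append, List.reverse_flatten, List.map_replicate,
      List.reverse_replicate, ← List.append_assoc] at hrs ⊢
    exact runP_append_of_flatten_replicate M.injM (Nat.dvd_mul_left _ _) hrs

/-- if an sRFA accepts `x yⁿ z` for every `n ≥ 1`, where `y` is
nonempty, then it accepts `xz`. -/
theorem stmt19 (A Qp Qm : Type) [Fintype Qp] [Fintype Qm]
    (M : SRFA A Qp Qm) (F : Set Qp) (x y z : List A) (hy : y ≠ [])
    (h : ∀ n : ℕ, 1 ≤ n → x ++ (List.replicate n y).flatten ++ z ∈ M.LangR F) :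
    x ++ z ∈ M.LangR F :=
  stmt19_general M F x y z (h _ (Nat.mul_pos (Nat.factorial_pos _) (Nat.factorial_pos _)))
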